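/- Let e ∈ S^d, a ∈ (0,π/2), and let K ∈ 𝒦̄_s^d satisfy e ∈ K ⊆ H_e^+ and r_e(K) ≥ a. Then Ũ_e(K) ≥ Ũ_e(B(e,a)) = σ_d(B(e,2a)), with equality if and only if K = B(e,a). -/

import Mathlib

open Real MeasureTheory Filter
open scoped RealInnerProductSpace ENNReal NNReal Topology

noncomputable section

/-- The ambient Euclidean space `ℝ^{d+1}`. -/
abbrev Esp (d : ℕ) : Type := EuclideanSpace ℝ (Fin (d + 1))

/-- The unit sphere `S^d ⊂ ℝ^{d+1}`. -/
def uSphere (d : ℕ) : Set (Esp d) := Metric.sphere 0 1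

/-- The spherical Lebesgue measure `σ_d` (d-dimensional Hausdorff measure restricted
to the unit sphere). -/
def sigmaMeas (d : ℕ) : Measure (Esp d) := (μH[(d : ℝ)]).restrict (uSphere d)

/-- `ω_{d+1} = σ_d(S^d)`, the total surface area of the unit sphere in `ℝ^{d+1}`. -/
def omegaTot (d : ℕ) : ℝ := (sigmaMeas d (uSphere d)).toReal

/-- `ω_d`, the `(d-1)`-dimensional measure of the unit sphere `S^{d-1} ⊂ ℝ^d`. -/
def omegaSm (d : ℕ) : ℝ :=
  (μH[((d : ℝ) - 1)] (Metric.sphere (0 : EuclideanSpace ℝ (Fin d)) 1)).toReal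

/-- `κ_d`, the volume of the unit ball in `ℝ^d`. -/
def kappaVol (d : ℕ) : ℝ :=
  (volume (Metric.ball (0 : EuclideanSpace ℝ (Fin d)) 1)).toReal

/-- The geodesic (angular) distance `d_s(x,y) = arccos ⟨x,y⟩` on the unit sphere. -/
def geo {d : ℕ} (x y : Esp d) : ℝ := Real.arccos ⟪x, y⟫

/-- The spherical ball (cap) `B(e,α)` of radius `α` centred at `e`. -/
def cap {d : ℕ} (e : Esp d) (α : ℝ) : Set (Esp d) := {x ∈ uSphere d | geo x e ≤ α}

/-- `K ∈ 𝒦̄_s^d`: a spherically convex body, i.e. the intersection of the unit sphere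
with a closed convex cone `C ≠ {0}` which is not a linear subspace. -/
def IsSphConvBody (d : ℕ) (K : Set (Esp d)) : Prop :=
  ∃ C : Set (Esp d), IsClosed C ∧ Convex ℝ C ∧
    (∀ x ∈ C, ∀ t : ℝ, 0 ≤ t → t • x ∈ C) ∧
    C ≠ {0} ∧ (∀ L : Submodule ℝ (Esp d), C ≠ (L : Set (Esp d))) ∧
    K = C ∩ uSphere d

/-- `K ∈ 𝒦_s^d`: a proper spherically convex body, i.e. the intersection of the unit
sphere with a line-free closed convex cone `C ≠ {0}`. -/
def IsProperSphConvBody (d : ℕ) (K : Set (Esp d)) : Prop :=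
  ∃ C : Set (Esp d), IsClosed C ∧ Convex ℝ C ∧
    (∀ x ∈ C, ∀ t : ℝ, 0 ≤ t → t • x ∈ C) ∧
    C ≠ {0} ∧ (∀ x ∈ C, x ≠ 0 → -x ∉ C) ∧
    K = C ∩ uSphere d

/-- The spherical mean width functional
`U₁(K) = (1/(2 ω_{d+1})) σ_d({x ∈ S^d : x^⊥ ∩ K ≠ ∅})`. -/
def U1 (d : ℕ) (K : Set (Esp d)) : ℝ :=
  (1 / (2 * omegaTot d)) * (sigmaMeas d {x | ∃ y ∈ K, ⟪x, y⟫ = 0}).toReal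

/-- `D(x) = ∫₀^x sin^{d-1} t dt`. -/
def Dfun (d : ℕ) (x : ℝ) : ℝ := ∫ t in (0:ℝ)..x, Real.sin t ^ (d - 1)

/-- `S_e = S^d ∩ e^⊥`, the great subsphere orthogonal to `e`. -/
def equator {d : ℕ} (e : Esp d) : Set (Esp d) := uSphere d ∩ {x | ⟪x, e⟫ = 0}

/-- The rotation invariant probability measure `σ⁰_{d-1}` on the great subsphere `S_e`. -/
def sigma0 (d : ℕ) (e : Esp d) : Measure (Esp d) :=
  (μH[((d : ℝ) - 1)] (equator e))⁻¹ • (μH[((d : ℝ) - 1)]).restrict (equator e)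

/-- The spherical radial function `α_{K,e}(u)`: the geodesic distance from `e` to the
boundary of `K` along the great circle through `e` in direction `u ∈ S_e`. -/
def sphRadial {d : ℕ} (K : Set (Esp d)) (e u : Esp d) : ℝ :=
  sSup {t : ℝ | 0 ≤ t ∧ t ≤ π / 2 ∧ (Real.cos t) • e + (Real.sin t) • u ∈ K}

/-- The set `-int(K*)`: points `e` of the sphere such that `K` is contained in the
open hemisphere centred at `e`. -/
def negIntPolar (d : ℕ) (K : Set (Esp d)) : Set (Esp d) :=
  {e ∈ uSphere d | ∀ x ∈ K, 0 < ⟪e, x⟫}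

/-- Points `e` of the sphere such that `K ⊆ {x : ⟨x,e⟩ ≥ 0}` (closed hemisphere). -/
def hemiCenters (d : ℕ) (K : Set (Esp d)) : Set (Esp d) :=
  {e ∈ uSphere d | ∀ x ∈ K, 0 ≤ ⟪x, e⟫}

/-- The `σ⁰_{d-1}`-average of `D ∘ α_{K,e}` over `S_e`. -/
def avgD (d : ℕ) (K : Set (Esp d)) (e : Esp d) : ℝ :=
  ∫ u, Dfun d (sphRadial K e u) ∂(sigma0 d e)

/-- The `L²(S_e, σ⁰_{d-1})`-deviation of `D ∘ α_{K,e}` from its average. -/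
def L2dev (d : ℕ) (K : Set (Esp d)) (e : Esp d) : ℝ :=
  Real.sqrt (∫ u, (Dfun d (sphRadial K e u) - avgD d K e) ^ 2 ∂(sigma0 d e))

/-- `Δ₂(K)`: infimum of the `L²` deviations over `e ∈ -int(K*)`. -/
def Delta2 (d : ℕ) (K : Set (Esp d)) : ℝ :=
  sInf (L2dev d K '' negIntPolar d K)

/-- `Δ₂*(K)`: infimum of the `L²` deviations over all `e` with
`K ⊆ {x : ⟨x,e⟩ ≥ 0}`. -/
def Delta2Star (d : ℕ) (K : Set (Esp d)) : ℝ :=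
  sInf (L2dev d K '' hemiCenters d K)

/-- The centred spherical inradius `r_e(K) = max{r ≥ 0 : B(e,r) ⊆ K}`. -/
def rcent (d : ℕ) (K : Set (Esp d)) (e : Esp d) : ℝ :=
  sSup {r : ℝ | 0 ≤ r ∧ cap e r ⊆ K}

/-- The centred spherical circumradius `R_e(K) = min{r ≥ 0 : K ⊆ B(e,r)}`. -/
def Rcent (d : ℕ) (K : Set (Esp d)) (e : Esp d) : ℝ :=
  sInf {r : ℝ | 0 ≤ r ∧ K ⊆ cap e r}

/-- The spherical inradius `Σ_r(K) = max{r_e(K) : e ∈ K}`. -/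
def SigmaR (d : ℕ) (K : Set (Esp d)) : ℝ :=
  sSup (rcent d K '' K)

/-- The deviation functional `ϑ_r(K) = min{R_e(K) - r_e(K) : e ∈ K, r_e(K) = Σ_r(K)}`. -/
def thetaR (d : ℕ) (K : Set (Esp d)) : ℝ :=
  sInf ((fun e => Rcent d K e - rcent d K e) '' {e ∈ K | rcent d K e = SigmaR d K})

/-- `Ũ_e(K) = σ_d({x ∈ S^d : (x-e)^⊥ ∩ K ≠ ∅})`. -/
def Utilde (d : ℕ) (e : Esp d) (K : Set (Esp d)) : ℝ :=
  (sigmaMeas d {x | ∃ y ∈ K, ⟪x - e, y⟫ = 0}).toReal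

/-- The spherical Hausdorff distance `δ_s`, based on the geodesic metric. -/
def sphHausdorff (d : ℕ) (K L : Set (Esp d)) : ℝ :=
  max (⨆ x ∈ K, ⨅ y ∈ L, geo x y) (⨆ y ∈ L, ⨅ x ∈ K, geo x y)

/-- Continuity of a functional on `𝒦̄_s^d` with respect to the spherical Hausdorff
metric `δ_s`. -/
def SphContinuous (d : ℕ) (F : Set (Esp d) → ℝ) : Prop :=
  ∀ K, IsSphConvBody d K → ∀ ε > (0:ℝ), ∃ δ > (0:ℝ), ∀ L, IsSphConvBody d L →
    sphHausdorff d K L < δ → |F K - F L| < ε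

/-- A hitting functional: continuous, nonnegative, vanishing exactly on one-pointed
sets. -/
def IsHittingFunctional (d : ℕ) (Φ : Set (Esp d) → ℝ) : Prop :=
  SphContinuous d Φ ∧ (∀ K, IsSphConvBody d K → 0 ≤ Φ K) ∧
    (∀ K, IsSphConvBody d K → (Φ K = 0 ↔ ∃ p, K = {p}))

/-- A size functional: continuous, nonnegative, not identically zero, vanishing on
one-pointed sets. -/
def IsSizeFunctional (d : ℕ) (S : Set (Esp d) → ℝ) : Prop :=
  SphContinuous d S ∧ (∀ K, IsSphConvBody d K → 0 ≤ S K) ∧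
    (∃ K, IsSphConvBody d K ∧ S K ≠ 0) ∧
    (∀ p ∈ uSphere d, S ({p} : Set (Esp d)) = 0)

/-- The isoperimetric constant `τ(Φ,Σ,a) = inf{Φ(K) : K ∈ 𝒦̄_s^d, Σ(K) ≥ a}`. -/
def tauConst (d : ℕ) (Φ S : Set (Esp d) → ℝ) (a : ℝ) : ℝ :=
  sInf (Φ '' {K | IsSphConvBody d K ∧ a ≤ S K})

/-- The spherical convex hull of a set `V ⊆ S^d`: the intersection of the sphere with
the closed convex cone generated by `V`. -/
def sphConvHull (d : ℕ) (V : Set (Esp d)) : Set (Esp d) :=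
  {x ∈ uSphere d | ∃ y ∈ convexHull ℝ V, ∃ t : ℝ, 0 < t ∧ x = t • y}

/-- A spherical polytope: the intersection of the sphere with a finitely generated
(polyhedral) cone, which is also a spherically convex body. -/
def IsSphPolytope (d : ℕ) (P : Set (Esp d)) : Prop :=
  IsSphConvBody d P ∧ ∃ V : Finset (Esp d),
    (V : Set (Esp d)) ⊆ uSphere d ∧ P = sphConvHull d (V : Set (Esp d))

/-- The vertices (extreme points) of a spherical polytope. -/
def sphExtremePoints (d : ℕ) (P : Set (Esp d)) : Set (Esp d) :=
  {x ∈ P | x ∉ sphConvHull d (P \ {x})}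

/-- The boundary of `K` relative to the sphere. -/
def sphFrontier (d : ℕ) (K : Set (Esp d)) : Set (Esp d) :=
  {x ∈ K | ∀ ε > (0:ℝ), ∃ y ∈ uSphere d, y ∉ K ∧ dist y x < ε}

/-- The functions `h_m(t) = (-1)^{m+1} e^{-t} + 2 ∑_{i=0}^{⌊m/2⌋} t^{m-2i}/(m-2i)!`. -/
def hFun (m : ℕ) (t : ℝ) : ℝ :=
  (-1 : ℝ) ^ (m + 1) * Real.exp (-t) +
    2 * ∑ i ∈ Finset.range (m / 2 + 1), t ^ (m - 2 * i) / (Nat.factorial (m - 2 * i) : ℝ)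

/-! For unit vectors `x ≠ -e`, the bisector `(x - e)^⊥` contains `x + e`, and
`∠(x, e) = 2 ∠(x + e, e)`. Hence the bisector hits the cap `B(e, a)` as soon as `∠(x, e) ≤ 2a`;
conversely every point of the bisector is equidistant from `x` and `e`, so by the triangle
inequality for angles it cannot hit the cap otherwise.

If `K = C ∩ S^d` is strictly larger than `B(e, a)`, the segment from `e` to a point of `K` outside
the cap runs through the interior of the cone `C`, so that interior contains some `z` with
`a < ∠(z, e) < π/2`. The reflection of `e` in the line through `z` is a point `x` with
`∠(x, e) > 2a` and `x + e` a positive multiple of `z`. By continuity the bisector of `e` and any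
point of the sphere near `x` still hits `K`, and these points form a set of positive measure. -/

section SphereMeasure

open Metric

variable {E : Type*} [NormedAddCommGroup E] [InnerProductSpace ℝ E] {x : E}

/-- The graph parametrization `w ↦ w + √(1 - ‖w‖²) x` of the hemisphere centred at the unit vector
`x`, a local inverse on the unit sphere of the orthogonal projection onto `x^⊥`. It takes values in
the sphere only for `‖w‖ ≤ 1`, since `√` vanishes on negative numbers. -/
def hemisphereGraph (x : E) (w : (ℝ ∙ x)ᗮ) : E := w + √(1 - ‖w‖ ^ 2) • x

theorem hemisphereGraph_zero (x : E) : hemisphereGraph x 0 = x := by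
  simp [hemisphereGraph]

theorem contDiffAt_hemisphereGraph_zero (x : E) : ContDiffAt ℝ 1 (hemisphereGraph x) 0 := by
  have hsqrt : ContDiffAt ℝ 1 (fun w : (ℝ ∙ x)ᗮ => √(1 - ‖w‖ ^ 2)) 0 :=
    (contDiffAt_const.sub (contDiff_norm_sq ℝ).contDiffAt).sqrt (by simp)
  exact (ℝ ∙ x)ᗮ.subtypeL.contDiff.contDiffAt.add (hsqrt.smul contDiffAt_const)

theorem orthogonalProjectionOnto_hemisphereGraph (x : E) (w : (ℝ ∙ x)ᗮ) :
    (ℝ ∙ x)ᗮ.orthogonalProjectionOnto (hemisphereGraph x w) = w := by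
  rw [hemisphereGraph, map_add, map_smul,
    Submodule.orthogonalProjectionOnto_orthogonalComplement_singleton_eq_zero, smul_zero, add_zero,
    Submodule.orthogonalProjectionOnto_mem_subspace_eq_self]

theorem hemisphereGraph_mem_sphere (hx : ‖x‖ = 1) {w : (ℝ ∙ x)ᗮ} (hw : ‖w‖ ≤ 1) :
    hemisphereGraph x w ∈ sphere (0 : E) 1 := by
  have horth : ⟪(w : E), √(1 - ‖w‖ ^ 2) • x⟫ = 0 := by
    rw [real_inner_smul_right, Submodule.mem_orthogonal_singleton_iff_inner_left.1 w.2, mul_zero]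
  rw [mem_sphere_zero_iff_norm, ← sq_eq_sq₀ (norm_nonneg _) zero_le_one, hemisphereGraph, sq,
    norm_add_sq_eq_norm_sq_add_norm_sq_real horth, norm_smul, hx, mul_one,
    norm_of_nonneg (sqrt_nonneg _), mul_self_sqrt (by nlinarith [norm_nonneg w]), ← sq,
    Submodule.coe_norm]
  ring

theorem hemisphereGraph_orthogonalProjectionOnto (hx : ‖x‖ = 1) {y : E} (hy : ‖y‖ = 1)
    (hxy : 0 ≤ ⟪x, y⟫) : hemisphereGraph x ((ℝ ∙ x)ᗮ.orthogonalProjectionOnto y) = y := by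
  have hdecomp : ((ℝ ∙ x)ᗮ.orthogonalProjectionOnto y : E) = y - ⟪x, y⟫ • x := by
    rw [← Submodule.starProjection_apply, Submodule.starProjection_orthogonal_val,
      Submodule.starProjection_unit_singleton ℝ hx]
  have hnorm : 1 - ‖(ℝ ∙ x)ᗮ.orthogonalProjectionOnto y‖ ^ 2 = ⟪x, y⟫ ^ 2 := by
    rw [Submodule.coe_norm, hdecomp, norm_sub_sq_real, norm_smul, real_inner_smul_right, hx, hy,
      real_inner_comm, norm_eq_abs, mul_one, sq_abs]
    ring
  rw [hemisphereGraph, hnorm, sqrt_sq hxy, hdecomp, sub_add_cancel]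

variable [FiniteDimensional ℝ E] [MeasurableSpace E] [BorelSpace E] {d : ℕ}

theorem isAddHaarMeasure_hausdorffMeasure_orthogonal (hd : Module.finrank ℝ E = d + 1)
    (hx : x ≠ 0) : (μH[(d : ℝ)] : Measure (ℝ ∙ x)ᗮ).IsAddHaarMeasure := by
  have : Fact (Module.finrank ℝ E = d + 1) := ⟨hd⟩
  rw [← Submodule.finrank_orthogonal_span_singleton (𝕜 := ℝ) (n := d) hx]
  infer_instance

theorem hausdorffMeasure_sphere_lt_top (hd : Module.finrank ℝ E = d + 1) :
    μH[(d : ℝ)] (sphere (0 : E) 1) < ∞ := by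
  refine (isCompact_sphere (0 : E) 1).measure_lt_top_of_nhdsWithin fun x hx => ?_
  have hx : ‖x‖ = 1 := mem_sphere_zero_iff_norm.1 hx
  have := isAddHaarMeasure_hausdorffMeasure_orthogonal hd 
    (ne_zero_of_norm_ne_zero (hx.trans_ne one_ne_zero))
  obtain ⟨C, t, ht, hlip⟩ := (contDiffAt_hemisphereGraph_zero x).exists_lipschitzOnWith
  obtain ⟨s, hs, hst, hcompact⟩ := local_compact_nhds ht
  have hproj : Tendsto (ℝ ∙ x)ᗮ.orthogonalProjectionOnto (𝓝 x) (𝓝 0) := by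
    rw [← Submodule.orthogonalProjectionOnto_orthogonalComplement_singleton_eq_zero (𝕜 := ℝ) x]
    exact (ℝ ∙ x)ᗮ.orthogonalProjectionOnto.continuous.tendsto x
  have hpos : ∀ᶠ y in 𝓝 x, 0 < ⟪x, y⟫ :=
    (continuous_const.inner continuous_id).continuousAt.eventually_const_lt (by simp [hx])
  refine ⟨hemisphereGraph x '' s, ?_, ?_⟩
  · filter_upwards [self_mem_nhdsWithin, nhdsWithin_le_nhds (hproj hs), nhdsWithin_le_nhds hpos]
      with y hy hys hxy
    exact ⟨_, hys,
      hemisphereGraph_orthogonalProjectionOnto hx (mem_sphere_zero_iff_norm.1 hy) hxy.le⟩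
  · calc μH[d] (hemisphereGraph x '' s)
        ≤ C ^ (d : ℝ) * μH[d] s := (hlip.mono hst).hausdorffMeasure_image_le d.cast_nonneg
      _ < ∞ := ENNReal.mul_lt_top (ENNReal.rpow_lt_top_of_nonneg d.cast_nonneg ENNReal.coe_ne_top)
        hcompact.measure_lt_top

theorem hausdorffMeasure_pos_of_mem_nhdsWithin_sphere (hd : Module.finrank ℝ E = d + 1)
    (hx : ‖x‖ = 1) {s : Set E} (hs : s ∈ 𝓝[sphere 0 1] x) : 0 < μH[(d : ℝ)] s := by
  have := isAddHaarMeasure_hausdorffMeasure_orthogonal hd 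
    (ne_zero_of_norm_ne_zero (hx.trans_ne one_ne_zero))
  have hgraph : Tendsto (hemisphereGraph x) (𝓝 0) (𝓝[sphere 0 1] x) := by
    refine tendsto_nhdsWithin_iff.2 ⟨?_, ?_⟩
    · simpa only [hemisphereGraph_zero] using
        (contDiffAt_hemisphereGraph_zero x).continuousAt.tendsto
    · filter_upwards [closedBall_mem_nhds 0 one_pos] with w hw
      exact hemisphereGraph_mem_sphere hx (mem_closedBall_zero_iff.1 hw)
  have hproj : (ℝ ∙ x)ᗮ.orthogonalProjectionOnto '' s ∈ 𝓝 0 := by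
    filter_upwards [hgraph hs] with w hw
    exact ⟨_, hw, orthogonalProjectionOnto_hemisphereGraph x w⟩
  calc 0 < μH[(d : ℝ)] ((ℝ ∙ x)ᗮ.orthogonalProjectionOnto '' s) :=
        Measure.measure_pos_of_mem_nhds _ hproj
    _ ≤ μH[(d : ℝ)] s := hausdorffMeasure_orthogonalProjectionOnto_le _ _ _ d.cast_nonneg

end SphereMeasure

section Angle

open InnerProductGeometry

variable {E : Type*} [NormedAddCommGroup E] [InnerProductSpace ℝ E] {x y z e : E}

theorem angle_eq_two_mul_angle_add (h : ‖x‖ = ‖e‖) (he : e ≠ 0) :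
    angle x e = 2 * angle (x + e) e := by
  have hsymm : angle x (x + e) = angle e (x + e) := by
    simp only [angle, inner_add_right, real_inner_self_eq_norm_sq, h, real_inner_comm e x,
      add_comm]
  rw [angle_eq_angle_add_add_angle_add x he, hsymm, angle_comm e, two_mul]

theorem angle_add_lt_angle (hy : y ≠ 0) (h₀ : angle x y ≠ 0) (hπ : angle x y ≠ π) :
    angle (x + y) y < angle x y := by
  have hadd := angle_eq_angle_add_add_angle_add x hy
  rw [angle_comm y] at hadd
  have hpos : angle x (x + y) ≠ 0 := by
    intro h
    obtain ⟨hx, r, -, hxy⟩ := angle_eq_zero_iff.1 h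
    have hy' : y = (r - 1) • x := by rw [sub_smul, one_smul, ← hxy, add_sub_cancel_left]
    rcases lt_trichotomy (r - 1) 0 with hr1 | hr1 | hr1
    · exact hπ (by rw [hy', angle_smul_right_of_neg _ _ hr1, angle_self_neg_of_nonzero hx])
    · exact hy (by rw [hy', hr1, zero_smul])
    · exact h₀ (by rw [hy', angle_smul_right_of_pos _ _ hr1, angle_self hx])
  have := (angle_nonneg x (x + y)).lt_of_ne' hpos
  linarith

theorem inner_pos_of_angle_lt_pi_div_two (h : angle x y < π / 2) : 0 < ⟪x, y⟫ := by
  by_contra! hxy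
  exact (arccos_lt_pi_div_two.1 h).not_ge (div_nonpos_of_nonpos_of_nonneg hxy (by positivity))

theorem exists_norm_eq_add_eq_smul (h : 0 < ⟪z, e⟫) :
    ∃ x : E, ‖x‖ = ‖e‖ ∧ ∃ c : ℝ, 0 < c ∧ x + e = c • z := by
  have hz : 0 < ‖z‖ := norm_pos_iff.2 fun hz => by simp [hz] at h
  refine ⟨(ℝ ∙ z).reflection e, LinearIsometryEquiv.norm_map _ _, 2 * (⟪z, e⟫ / ‖z‖ ^ 2),
    by positivity, ?_⟩
  rw [Submodule.reflection_singleton_apply, sub_add_cancel, mul_smul, two_smul, two_smul]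
  rfl

end Angle

section Cone

open InnerProductGeometry AffineMap

variable {E : Type*} [NormedAddCommGroup E]

section NormedSpace

variable [NormedSpace ℝ E] {C : ConvexCone ℝ E}

theorem tendsto_add_smul_nhdsGT (x v : E) :
    Tendsto (fun t : ℝ => x + t • v) (𝓝[>] 0) (𝓝 x) := by
  have h : Tendsto (fun t : ℝ => x + t • v) (𝓝 0) (𝓝 (x + (0 : ℝ) • v)) :=
    (by fun_prop : Continuous fun t : ℝ => x + t • v).tendsto 0
  rw [zero_smul, add_zero] at h
  exact h.mono_left nhdsWithin_le_nhds

theorem zero_notMem_interior_convexCone (hC : C ≠ ⊤) : (0 : E) ∉ interior (C : Set E) := by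
  refine fun h => hC (top_unique fun x _ => ?_)
  have hev : ∀ᶠ c : ℝ in 𝓝[>] 0, 0 + c • x ∈ C :=
    (tendsto_add_smul_nhdsGT 0 x).eventually (mem_interior_iff_mem_nhds.1 h)
  obtain ⟨c, hcx, hc⟩ := (hev.and self_mem_nhdsWithin).exists
  rw [zero_add] at hcx
  exact (C.smul_mem_iff hc).1 hcx

theorem smul_mem_interior_convexCone {c : ℝ} (hc : 0 < c) {x : E} (hx : x ∈ interior (C : Set E)) :
    c • x ∈ interior (C : Set E) := by
  refine interior_maximal ?_ (isOpen_interior.smul₀ hc.ne') (Set.smul_mem_smul_set hx)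
  rintro _ ⟨y, hy, rfl⟩
  exact C.smul_mem hc (interior_subset hy)

theorem normalize_mem_convexCone_iff {x : E} (hx : x ≠ 0) :
    NormedSpace.normalize x ∈ C ↔ x ∈ C :=
  C.smul_mem_iff (inv_pos.2 (norm_pos_iff.2 hx))

end NormedSpace

variable [InnerProductSpace ℝ E] {e : E}

theorem mem_convexCone_of_angle_lt {C : ConvexCone ℝ E} {a : ℝ}
    (h : ∀ y, ‖y‖ = 1 → angle y e < a → y ∈ C) {x : E} (hx : x ≠ 0) (hxe : angle x e < a) :
    x ∈ C := by
  rw [← normalize_mem_convexCone_iff hx]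
  exact h _ (NormedSpace.norm_normalize_eq_one_iff.2 hx) (by rwa [angle_normalize_left])

theorem mem_interior_convexCone_of_angle_lt {C : ConvexCone ℝ E} (he : e ≠ 0) {a : ℝ} (ha : 0 < a)
    (h : ∀ y, ‖y‖ = 1 → angle y e < a → y ∈ C) : e ∈ interior (C : Set E) := by
  have hcont : ContinuousAt (fun x => angle x e) e :=
    (continuousAt_angle he he).comp (f := fun x => (x, e)) (by fun_prop)
  have hlt : ∀ᶠ x in 𝓝 e, angle x e < a :=
    hcont.eventually_lt continuousAt_const (by rwa [angle_self he])
  rw [mem_interior_iff_mem_nhds]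
  filter_upwards [hlt, eventually_ne_nhds he] with x hxe hx
  exact mem_convexCone_of_angle_lt h hx hxe

theorem mem_convexCone_of_angle_le {C : ConvexCone ℝ E} (hC : IsClosed (C : Set E)) (he : e ≠ 0)
    {a : ℝ} (ha : 0 < a) (haπ : a < π) (h : ∀ y, ‖y‖ = 1 → angle y e < a → y ∈ C) {x : E}
    (hx : x ≠ 0) (hxe : angle x e ≤ a) : x ∈ C := by
  rcases hxe.lt_or_eq with hxe | hxe
  · exact mem_convexCone_of_angle_lt h hx hxe
  have hlim := tendsto_add_smul_nhdsGT x e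
  refine hC.mem_of_tendsto hlim ?_
  filter_upwards [self_mem_nhdsWithin, hlim.eventually_ne hx] with t (ht : 0 < t) hne
  refine mem_convexCone_of_angle_lt h hne ?_
  have hxte : angle x (t • e) = a := by rw [angle_smul_right_of_pos _ _ ht, hxe]
  rw [← angle_smul_right_of_pos _ _ ht, ← hxte]
  exact angle_add_lt_angle (smul_ne_zero ht.ne' he) (hxte.trans_ne ha.ne') (hxte.trans_ne haπ.ne)

theorem exists_mem_interior_angle_eq {s : Set E} (hs : Convex ℝ s) (he : e ∈ interior s)
    (h0 : (0 : E) ∉ interior s) {y : E} (hy : y ∈ s) (hy0 : y ≠ 0) {β : ℝ} (hβ : 0 ≤ β)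
    (hβy : β < angle y e) : ∃ z ∈ interior s, angle z e = β := by
  have he0 : e ≠ 0 := ne_of_mem_of_not_mem he h0
  have hmem : ∀ t ∈ Set.Ico (0 : ℝ) 1, lineMap e y t ∈ interior s := by
    rintro t ⟨ht0, ht1⟩
    rw [lineMap_apply_module]
    exact hs.combo_interior_self_mem_interior he hy (sub_pos.2 ht1) ht0 (sub_add_cancel _ _)
  have hcont : ContinuousOn (fun t : ℝ => angle (lineMap e y t) e) (Set.Icc 0 1) := by
    intro t ht
    have hne : lineMap e y t ≠ 0 := by
      rcases ht.2.lt_or_eq with ht1 | rfl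
      · exact ne_of_mem_of_not_mem (hmem t ⟨ht.1, ht1⟩) h0
      · rwa [lineMap_apply_one]
    exact ((continuousAt_angle hne he0).comp
      (f := fun t : ℝ => (lineMap e y t, e)) (by fun_prop)).continuousWithinAt
  obtain ⟨t, ht, htβ⟩ := intermediate_value_Icc zero_le_one hcont
    (show β ∈ Set.Icc _ _ by simpa [lineMap_apply_zero, angle_self he0] using ⟨hβ, hβy.le⟩)
  refine ⟨_, hmem t ⟨ht.1, ht.2.lt_of_ne ?_⟩, htβ⟩
  rintro rfl
  exact hβy.ne' (by simpa using htβ)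

theorem exists_add_mem_interior_two_mul_lt_angle {C : ConvexCone ℝ E} (hC : C ≠ ⊤)
    (he : e ∈ interior (C : Set E)) {y : E} (hy : y ∈ C) (hy0 : y ≠ 0) {a : ℝ} (ha : 0 ≤ a)
    (ha' : a < π / 2) (hay : a < angle y e) :
    ∃ x, ‖x‖ = ‖e‖ ∧ x + e ∈ interior (C : Set E) ∧ 2 * a < angle x e := by
  have h0 := zero_notMem_interior_convexCone hC
  have he0 : e ≠ 0 := ne_of_mem_of_not_mem he h0
  obtain ⟨β, haβ, hβ⟩ := exists_between (lt_min ha' hay)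
  obtain ⟨hβπ, hβy⟩ := lt_min_iff.1 hβ
  obtain ⟨z, hzC, rfl⟩ :=
    exists_mem_interior_angle_eq C.convex he h0 hy hy0 (ha.trans haβ.le) hβy
  obtain ⟨x, hx, c, hc, hxe⟩ := exists_norm_eq_add_eq_smul (inner_pos_of_angle_lt_pi_div_two hβπ)
  refine ⟨x, hx, hxe ▸ smul_mem_interior_convexCone hc hzC, ?_⟩
  rw [angle_eq_two_mul_angle_add hx he0, hxe, angle_smul_left_of_pos _ _ hc]
  linarith

end Cone

section Sphere

open InnerProductGeometry

variable {d : ℕ} {e x : Esp d} {K L : Set (Esp d)} {a : ℝ}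

theorem mem_uSphere : x ∈ uSphere d ↔ ‖x‖ = 1 := mem_sphere_zero_iff_norm

theorem measurableSet_uSphere : MeasurableSet (uSphere d) := Metric.isClosed_sphere.measurableSet

theorem geo_eq_angle (hx : ‖x‖ = 1) (he : ‖e‖ = 1) : geo x e = angle x e := by
  rw [geo, angle, hx, he, mul_one, div_one]

theorem mem_cap (he : ‖e‖ = 1) : x ∈ cap e a ↔ ‖x‖ = 1 ∧ angle x e ≤ a :=
  (and_congr_left' mem_uSphere).trans (and_congr_right fun hx => by rw [geo_eq_angle hx he])

theorem isClosed_cap : IsClosed (cap e a) :=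
  Metric.isClosed_sphere.inter <| isClosed_le
    (continuous_arccos.comp (continuous_id.inner continuous_const)) continuous_const

instance isFiniteMeasure_sigmaMeas : IsFiniteMeasure (sigmaMeas d) :=
  ⟨by rw [sigmaMeas, Measure.restrict_apply_univ]
      exact hausdorffMeasure_sphere_lt_top finrank_euclideanSpace_fin⟩

theorem sigmaMeas_pos_of_mem_nhdsWithin (hx : x ∈ uSphere d) {s : Set (Esp d)}
    (hs : s ∈ 𝓝[uSphere d] x) : 0 < sigmaMeas d s := by
  rw [sigmaMeas, Measure.restrict_apply' measurableSet_uSphere]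
  exact hausdorffMeasure_pos_of_mem_nhdsWithin_sphere finrank_euclideanSpace_fin
    (mem_uSphere.1 hx) (inter_mem hs self_mem_nhdsWithin)

theorem IsSphConvBody.exists_convexCone (hK : IsSphConvBody d K) :
    ∃ C : ConvexCone ℝ (Esp d), IsClosed (C : Set (Esp d)) ∧ C ≠ ⊤ ∧
      K = (C : Set (Esp d)) ∩ uSphere d := by
  obtain ⟨C, hclosed, hconv, hsmul, -, hsub, rfl⟩ := hK
  refine ⟨⟨C, fun c hc x hx => hsmul x hx c hc.le, fun x hx y hy => ?_⟩, hclosed, ?_, rfl⟩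
  · have hmid := hsmul _ (hconv hx hy one_half_pos.le one_half_pos.le (add_halves 1)) 2 zero_le_two
    rwa [← smul_add, smul_smul, mul_one_div_cancel two_ne_zero, one_smul] at hmid
  · exact fun h => hsub ⊤ (congrArg SetLike.coe h)

theorem exists_lt_cap_subset_of_lt_rcent {r : ℝ} (hr0 : 0 ≤ r) (hr : r < rcent d K e) :
    ∃ s, r < s ∧ cap e s ⊆ K := by
  have hne : {s : ℝ | 0 ≤ s ∧ cap e s ⊆ K}.Nonempty := by
    by_contra! h
    rw [rcent, h, sSup_empty] at hr
    exact hr.not_ge hr0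
  obtain ⟨s, ⟨-, hs⟩, hrs⟩ := exists_lt_of_lt_csSup hne hr
  exact ⟨s, hrs, hs⟩

theorem IsSphConvBody.cap_subset_of_le_rcent (hK : IsSphConvBody d K) (he : ‖e‖ = 1)
    (ha : 0 < a) (haπ : a < π) (hr : a ≤ rcent d K e) : cap e a ⊆ K := by
  obtain ⟨C, hC, -, rfl⟩ := hK.exists_convexCone
  have hlt : ∀ y, ‖y‖ = 1 → angle y e < a → y ∈ C := fun y hy hye => by
    obtain ⟨s, hs, hsK⟩ := exists_lt_cap_subset_of_lt_rcent (angle_nonneg _ _) (hye.trans_le hr)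
    exact (hsK ((mem_cap he).2 ⟨hy, hs.le⟩)).1
  intro x hx
  obtain ⟨hx1, hxe⟩ := (mem_cap he).1 hx
  exact ⟨mem_convexCone_of_angle_le hC (ne_zero_of_norm_ne_zero (he.trans_ne one_ne_zero)) ha haπ
    hlt (ne_zero_of_norm_ne_zero (hx1.trans_ne one_ne_zero)) hxe, hx.1⟩

/-- The set of points `x` of the sphere whose bisector with `e` hits `K`, i.e. `(x - e)^⊥ ∩ K ≠ ∅`,
so that `Ũ_e(K)` is its spherical measure. -/
def bisectorHits (e : Esp d) (K : Set (Esp d)) : Set (Esp d) :=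
  {x ∈ uSphere d | ∃ y ∈ K, ⟪x - e, y⟫ = 0}

theorem Utilde_eq_measureReal_bisectorHits :
    Utilde d e K = (sigmaMeas d).real (bisectorHits e K) := by
  rw [Utilde, Measure.real, sigmaMeas, Measure.restrict_apply' measurableSet_uSphere,
    Measure.restrict_apply' measurableSet_uSphere]
  congr 2
  ext x
  simp only [bisectorHits, Set.mem_inter_iff, Set.mem_ofPred_eq]
  tauto

theorem bisectorHits_mono (h : K ⊆ L) : bisectorHits e K ⊆ bisectorHits e L :=
  fun _ ⟨hx, y, hy, hxy⟩ => ⟨hx, y, h hy, hxy⟩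

theorem Utilde_mono (h : K ⊆ L) : Utilde d e K ≤ Utilde d e L := by
  simp only [Utilde_eq_measureReal_bisectorHits]
  exact measureReal_mono (bisectorHits_mono h)

theorem mem_bisectorHits_of_normalize_add_mem (hx : ‖x‖ = 1) (he : ‖e‖ = 1)
    (h : NormedSpace.normalize (x + e) ∈ K) : x ∈ bisectorHits e K := by
  refine ⟨mem_uSphere.2 hx, _, h, ?_⟩
  rw [NormedSpace.normalize, real_inner_smul_right, real_inner_comm,
    (real_inner_add_sub_eq_zero_iff x e).2 (hx.trans he.symm), mul_zero]

theorem bisectorHits_cap (he : ‖e‖ = 1) (ha : a < π / 2) :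
    bisectorHits e (cap e a) = cap e (2 * a) := by
  ext x
  rw [mem_cap he]
  constructor
  · rintro ⟨hx, y, hy, hxy⟩
    obtain ⟨hy1, hye⟩ := (mem_cap he).1 hy
    rw [mem_uSphere] at hx
    have hangle : angle x y = angle e y := by
      rw [inner_sub_left, sub_eq_zero] at hxy
      rw [angle, angle, hxy, hx, he]
    refine ⟨hx, (angle_le_angle_add_angle x y e).trans ?_⟩
    rw [hangle, angle_comm e]
    linarith
  · rintro ⟨hx, hxe⟩
    have he0 : e ≠ 0 := ne_zero_of_norm_ne_zero (he.trans_ne one_ne_zero)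
    have hadd : x + e ≠ 0 := by
      intro h
      rw [eq_neg_of_add_eq_zero_left h, angle_neg_self_of_nonzero he0] at hxe
      linarith
    refine mem_bisectorHits_of_normalize_add_mem hx he ((mem_cap he).2
      ⟨NormedSpace.norm_normalize_eq_one_iff.2 hadd, ?_⟩)
    rw [angle_eq_two_mul_angle_add (hx.trans he.symm) he0] at hxe
    rw [angle_normalize_left]
    linarith

theorem Utilde_cap (he : ‖e‖ = 1) (ha : a < π / 2) :
    Utilde d e (cap e a) = (sigmaMeas d).real (cap e (2 * a)) := by
  rw [Utilde_eq_measureReal_bisectorHits, bisectorHits_cap he ha]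

theorem IsSphConvBody.exists_bisectorHits_diff_cap_mem_nhdsWithin (hK : IsSphConvBody d K)
    (he : ‖e‖ = 1) (ha : 0 < a) (ha' : a < π / 2) (h : cap e a ⊂ K) :
    ∃ x ∈ uSphere d, bisectorHits e K \ cap e (2 * a) ∈ 𝓝[uSphere d] x := by
  obtain ⟨C, -, hC, rfl⟩ := hK.exists_convexCone
  obtain ⟨hsub, y, ⟨hyC, hy⟩, hya⟩ := Set.ssubset_iff_exists.1 h
  rw [mem_uSphere] at hy
  have heC : e ∈ interior (C : Set (Esp d)) :=
    mem_interior_convexCone_of_angle_lt (ne_zero_of_norm_ne_zero (he.trans_ne one_ne_zero)) ha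
      fun z hz hze => (hsub ((mem_cap he).2 ⟨hz, hze.le⟩)).1
  have hay : a < angle y e := by
    by_contra! hya'
    exact hya ((mem_cap he).2 ⟨hy, hya'⟩)
  obtain ⟨x, hxe, hxC, hxa⟩ := exists_add_mem_interior_two_mul_lt_angle hC heC hyC
    (ne_zero_of_norm_ne_zero (hy.trans_ne one_ne_zero)) ha.le ha' hay
  have hxcap : x ∉ cap e (2 * a) := fun hx => hxa.not_ge ((mem_cap he).1 hx).2
  have hadd : ∀ᶠ w in 𝓝 x, w + e ∈ interior (C : Set (Esp d)) :=
    (continuous_add_const e).continuousAt (isOpen_interior.mem_nhds hxC)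
  refine ⟨x, mem_uSphere.2 (hxe.trans he), ?_⟩
  filter_upwards [self_mem_nhdsWithin, nhdsWithin_le_nhds hadd,
    nhdsWithin_le_nhds (isClosed_cap.isOpen_compl.mem_nhds hxcap)] with w hw hwC hwcap
  have hw0 : w + e ≠ 0 := ne_of_mem_of_not_mem hwC (zero_notMem_interior_convexCone hC)
  exact ⟨mem_bisectorHits_of_normalize_add_mem (mem_uSphere.1 hw) he
    ⟨(normalize_mem_convexCone_iff hw0).2 (interior_subset hwC),
      mem_uSphere.2 (NormedSpace.norm_normalize_eq_one_iff.2 hw0)⟩, hwcap⟩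

theorem IsSphConvBody.Utilde_cap_lt (hK : IsSphConvBody d K) (he : ‖e‖ = 1) (ha : 0 < a)
    (ha' : a < π / 2) (h : cap e a ⊂ K) : Utilde d e (cap e a) < Utilde d e K := by
  obtain ⟨x, hx, hdiff⟩ := hK.exists_bisectorHits_diff_cap_mem_nhdsWithin he ha ha' h
  have hpos : 0 < (sigmaMeas d).real (bisectorHits e K \ cap e (2 * a)) :=
    ENNReal.toReal_pos (sigmaMeas_pos_of_mem_nhdsWithin hx hdiff).ne' (measure_ne_top _ _)
  have hsub : cap e (2 * a) ⊆ bisectorHits e K :=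
    bisectorHits_cap he ha' ▸ bisectorHits_mono h.subset
  rw [measureReal_sdiff hsub isClosed_cap.measurableSet, sub_pos] at hpos
  rwa [Utilde_cap he ha', Utilde_eq_measureReal_bisectorHits]

end Sphere

theorem statement3_general (d : ℕ) (e : Esp d) (he : e ∈ uSphere d) (a : ℝ) (ha : 0 < a)
    (ha' : a < π / 2) (K : Set (Esp d)) (hK : IsSphConvBody d K) (hr : a ≤ rcent d K e) :
    Utilde d e K ≥ Utilde d e (cap e a) ∧
    Utilde d e (cap e a) = (sigmaMeas d (cap e (2 * a))).toReal ∧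
    (Utilde d e K = Utilde d e (cap e a) ↔ K = cap e a) := by
  rw [mem_uSphere] at he
  have hsub : cap e a ⊆ K := hK.cap_subset_of_le_rcent he ha (by linarith [pi_pos]) hr
  refine ⟨Utilde_mono hsub, Utilde_cap he ha', fun h => ?_, fun h => by rw [h]⟩
  by_contra hne
  exact (hK.Utilde_cap_lt he ha ha' (hsub.ssubset_of_ne (Ne.symm hne))).ne' h

/-- Theorem D, first part. If `e ∈ K ⊆ H_e^+` and `r_e(K) ≥ a`, then
`Ũ_e(K) ≥ Ũ_e(B(e,a)) = σ_d(B(e,2a))`, with equality iff `K = B(e,a)`. -/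
theorem statement3 (d : ℕ) (hd : 2 ≤ d) (e : Esp d) (he : e ∈ uSphere d)
    (a : ℝ) (ha : 0 < a) (ha' : a < π / 2) (K : Set (Esp d))
    (hK : IsSphConvBody d K) (heK : e ∈ K) (hhemi : ∀ x ∈ K, 0 ≤ ⟪x, e⟫)
    (hr : a ≤ rcent d K e) :
    Utilde d e K ≥ Utilde d e (cap e a) ∧
    Utilde d e (cap e a) = (sigmaMeas d (cap e (2 * a))).toReal ∧
    (Utilde d e K = Utilde d e (cap e a) ↔ K = cap e a) := by
  exact statement3_general d e he a ha ha' K hK hr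

end
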